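/- arXiv:2111.01759 — 2 statements merged into one kernel-verified Lean document; each statement's English description precedes it below -/
import Mathlib

section
/- Fix any outcome (w, T) of the extended walk and its dependency tree. Suppose T contains two nodes ᾱ ≠ β̄ with a_{w_ᾱ} = a_{w_β̄}. Then for every node φ ∈ {1,…,|w|} of T, there exist nodes α and β of T such that α ≠ β, a_{w_α} = a_{w_β}, and for any two of the three paths p(φ − 1), p(α − 1), p(β − 1) there is no collision between them. -/
open MeasureTheory
open scoped Classical ENNReal

noncomputable section

namespace EDW

/-- The star-extended domain `[m] ∪ {⋆₀, ⋆₁, …}`: `Sum.inl x` is a base element of `[m]`,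
`Sum.inr t` is the star `⋆_t`. -/
abbrev Dom (m : ℕ) : Type := Sum (Fin m) ℕ

/-- A position (node) of the extended walk: its vertex together with, for every level `i`,
the value `a_i(μ)` that was computed at this position (if assigned). -/
structure Node (m n : ℕ) : Type where
  vtx : Fin n
  tag : ℕ → Option (Dom m)

theorem freshStar_exists {m : ℕ} (C : Finset (Dom m)) :
    ∃ t : ℕ, (Sum.inr t : Dom m) ∉ C := by
  by_contra hc
  push_neg at hc
  have hinj : Function.Injective (fun t : ℕ => (Sum.inr t : Dom m)) := by
    intro a b h
    simpa using h
  have hsub : Set.range (fun t : ℕ => (Sum.inr t : Dom m)) ⊆ ↑C := by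
    rintro x ⟨t, rfl⟩
    exact hc t
  exact Set.infinite_range_of_injective hinj (C.finite_toSet.subset hsub)

/-- The least `t` with `⋆_t ∉ C`. -/
def freshStar {m : ℕ} (C : Finset (Dom m)) : ℕ := Nat.find (freshStar_exists C)

variable {m n : ℕ}

/-- One level of the extended-walk loop; `fuel` bounds the number of remaining loop
iterations, and `sub s'` is the level-`(i-1)` walk started at `s'`. -/
def loopF (a : Fin n → Fin m) (g : ℕ → Dom m → Bool) (r : ℕ → Dom m → Fin n)
    (sub : Fin n → Option (List (Node m n))) (i : ℕ) :
    ℕ → Finset (Dom m) → Bool → Fin n → List (Node m n) → Option (List (Node m n))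
  | 0, _, _, _, _ => none
  | fuel + 1, C, star, sj, acc =>
    match sub sj with
    | none => none
    | some subw =>
      match subw.getLast? with
      | none => none
      | some xnode =>
        let useBase : Prop := star = false ∧ (Sum.inl (a xnode.vtx) : Dom m) ∉ C
        let y : Dom m := if useBase then Sum.inl (a xnode.vtx) else Sum.inr (freshStar C)
        let star' : Bool := if useBase then false else true
        let xnode' : Node m n := ⟨xnode.vtx, fun t => if t = i then some y else xnode.tag t⟩
        let acc' := acc ++ subw.dropLast ++ [xnode']
        if g i y then loopF a g r sub i fuel (insert y C) star' (r i y) acc' else some acc'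

/-- `walkF fuel i s'` computes the extended walk `walk(s', i)`; it returns `none` if the
fuel is insufficient (the true walk is obtained by letting the fuel go to infinity). -/
def walkF (a : Fin n → Fin m) (g : ℕ → Dom m → Bool) (r : ℕ → Dom m → Fin n) :
    ℕ → ℕ → Fin n → Option (List (Node m n))
  | _, 0, s' => some [⟨s', fun _ => none⟩]
  | 0, _ + 1, _ => none
  | fuel + 1, i + 1, s' =>
    loopF a g r (fun sj => walkF a g r fuel i sj) (i + 1) (fuel + 1) ∅ false s' []

/-- The extended walk `walk(s, ℓ)`: `some w` iff the walk terminates, with output `w`. -/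
def extWalk (a : Fin n → Fin m) (g : ℕ → Dom m → Bool) (r : ℕ → Dom m → Fin n)
    (ℓ : ℕ) (s : Fin n) : Option (List (Node m n)) :=
  if h : ∃ fuel, (walkF a g r fuel ℓ s).isSome = true then walkF a g r (Nat.find h) ℓ s
  else none

/-! ### The relaxed extended walk -/

/-- Storage for the recorded sets `C^{i,k¹}`. -/
abbrev Store (m : ℕ) : Type := ℕ → Option (Finset (Dom m))

/-- One level of the relaxed extended-walk loop. `subR k' st s'` is the relaxed recursive
call at level `i - 1` with index parameter `k'` and store `st`; `subU s'` is the last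
vertex of the un-relaxed walk `walk(s', i-1)`.  The extra loop state is: `j`, the number
of level-`i` nodes produced so far; `Crec = C_{min(j, k¹_i)}`; and the store `st`. -/
def rloopF (a : Fin n → Fin m) (g : ℕ → Dom m → Bool) (r : ℕ → Dom m → Fin n)
    (ℓ : ℕ) (k1 k2 : ℕ → ℕ)
    (subR : (ℕ → ℕ) → Store m → Fin n → Option (List (Node m n) × Store m))
    (subU : Fin n → Option (Fin n)) (i : ℕ) (kctx : ℕ → ℕ) :
    ℕ → Finset (Dom m) → Bool → Fin n → List (Node m n) → ℕ → Finset (Dom m) → Store m →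
      Option (List (Node m n) × Store m)
  | 0, _, _, _, _, _, _, _ => none
  | fuel + 1, C, star, sj, acc, j, Crec, st =>
    match subR (fun t => if t = i then j else if i < t then kctx t else 0) st sj with
    | none => none
    | some (subw, st₁) =>
      match subU sj, subw.getLast? with
      | some xv, some lastnd =>
        let useBase : Prop := star = false ∧ (Sum.inl (a xv) : Dom m) ∉ C
        let y : Dom m := if useBase then Sum.inl (a xv) else Sum.inr (freshStar C)
        let star' : Bool := if useBase then false else true
        let lastnd' : Node m n := ⟨lastnd.vtx, fun t => if t = i then some y else lastnd.tag t⟩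
        let acc' := acc ++ subw.dropLast ++ [lastnd']
        if g i y then
          rloopF a g r ℓ k1 k2 subR subU i kctx fuel (insert y C) star' (r i y) acc' (j + 1)
            (if j + 1 ≤ k1 i then insert y C else Crec) st₁
        else
          some (acc',
            if (∀ t, i < t → t ≤ ℓ → kctx t = k1 t) ∧ (∃ t, i < t ∧ t ≤ ℓ ∧ k1 t < k2 t) then
              fun t => if t = i then some Crec else st₁ t
            else st₁)
      | _, _ => none

/-- The relaxed extended walk `walk^{k¹,k²}(s', i, kctx)`, with fuel. -/
def rwalkF (a : Fin n → Fin m) (g : ℕ → Dom m → Bool) (r : ℕ → Dom m → Fin n)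
    (ℓ : ℕ) (k1 k2 : ℕ → ℕ) :
    ℕ → ℕ → (ℕ → ℕ) → Store m → Fin n → Option (List (Node m n) × Store m)
  | _, 0, _, st, s' => some ([⟨s', fun _ => none⟩], st)
  | 0, _ + 1, _, _, _ => none
  | fuel + 1, i + 1, kctx, st, s' =>
    let C₀ : Finset (Dom m) :=
      if (∀ t, i + 1 < t → t ≤ ℓ → kctx t = k2 t) ∧ (∃ t, i + 1 < t ∧ t ≤ ℓ ∧ k1 t < k2 t) ∧
          0 < k2 (i + 1) then (st (i + 1)).getD ∅
      else ∅
    rloopF a g r ℓ k1 k2 (fun k' st' sj => rwalkF a g r ℓ k1 k2 fuel i k' st' sj)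
      (fun sj => ((walkF a g r fuel i sj).bind List.getLast?).map Node.vtx)
      (i + 1) kctx (fuel + 1) C₀ false s' [] 0 C₀ st

/-- The relaxed extended walk `w^{k¹,k²} = walk^{k¹,k²}(s, ℓ, (0,…,0))`:
`some w` iff it terminates, with output `w`. -/
def extRWalk (a : Fin n → Fin m) (g : ℕ → Dom m → Bool) (r : ℕ → Dom m → Fin n)
    (ℓ : ℕ) (k1 k2 : ℕ → ℕ) (s : Fin n) : Option (List (Node m n)) :=
  if h : ∃ fuel, (rwalkF a g r ℓ k1 k2 fuel ℓ (fun _ => 0) (fun _ => none) s).isSome = true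
  then (rwalkF a g r ℓ k1 k2 (Nat.find h) ℓ (fun _ => 0) (fun _ => none) s).map Prod.fst
  else none

/-! ### Positions, levels and the dependency tree -/

/-- The vertex `w_μ` (positions are 1-indexed; `μ = 0` is the root, which has no vertex). -/
def vtxAt (w : List (Node m n)) (μ : ℕ) : Option (Fin n) :=
  if μ = 0 then none else (w[μ - 1]?).map Node.vtx

/-- The value `a_i(μ)`. -/
def tagAt (w : List (Node m n)) (μ i : ℕ) : Option (Dom m) :=
  if μ = 0 then none else (w[μ - 1]?).bind fun nd => nd.tag i

/-- `level(μ)`: the least `i ∈ [1, ℓ]` with `g_i(a_i(μ)) = 1`, and `ℓ + 1` if there is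
none (in particular for the root `0` and for the final position of the walk). -/
def levelOf (ℓ : ℕ) (g : ℕ → Dom m → Bool) (w : List (Node m n)) (μ : ℕ) : ℕ :=
  if h : ∃ i, (1 ≤ i ∧ i ≤ ℓ) ∧ ∃ y, tagAt w μ i = some y ∧ g i y = true then Nat.find h
  else ℓ + 1

/-- `a(μ) = a_{level(μ)}(μ)`. -/
def aAt (ℓ : ℕ) (g : ℕ → Dom m → Bool) (w : List (Node m n)) (μ : ℕ) : Option (Dom m) :=
  tagAt w μ (levelOf ℓ g w μ)

/-- `next(μ) = w_{μ+1}`. -/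
def nextAt (w : List (Node m n)) (μ : ℕ) : Option (Fin n) := vtxAt w (μ + 1)

/-- `ν` lies on the root-to-`μ` path of the dependency tree with level function `lvl`. -/
def OnPath (lvl : ℕ → ℕ) (ν μ : ℕ) : Prop :=
  ν ≤ μ ∧ ∀ ρ, ν < ρ → ρ ≤ μ → lvl ρ ≤ lvl ν

/-- The number of level-`i` nodes on the root-to-`μ` path. -/
def idxAt (lvl : ℕ → ℕ) (μ i : ℕ) : ℕ :=
  ((Finset.range (μ + 1)).filter fun ν => OnPath lvl ν μ ∧ lvl ν = i).card

/-- Node `μ` of the dependency tree (of a walk of length `wlen`) has index `k`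
(only the components `k_i` with `1 ≤ i ≤ ℓ` are relevant). -/
def HasIdx (ℓ : ℕ) (lvl : ℕ → ℕ) (wlen μ : ℕ) (k : ℕ → ℕ) : Prop :=
  μ ≤ wlen ∧ ∀ i, 1 ≤ i → i ≤ ℓ → idxAt lvl μ i = k i

/-- There is a collision between the root-to-`μ₁` path and the root-to-`μ₂` path. -/
def Collision (lvl : ℕ → ℕ) (av : ℕ → Option (Dom m)) (μ₁ μ₂ : ℕ) : Prop :=
  ∃ α β, OnPath lvl α μ₁ ∧ ¬ OnPath lvl α μ₂ ∧ OnPath lvl β μ₂ ∧ ¬ OnPath lvl β μ₁ ∧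
    lvl α = lvl β ∧ av α = av β

/-! ### The pseudorandom hash function and reachability -/

/-- The pseudorandom hash function of the family `H_{ℓ,m,n}` built from `g, r`
(`none` plays the role of `⋆`). -/
def hashOf (ℓ : ℕ) (g : ℕ → Dom m → Bool) (r : ℕ → Dom m → Fin n) (x : Fin m) :
    Option (Fin n) :=
  if h : ∃ i, (1 ≤ i ∧ i ≤ ℓ) ∧ g i (Sum.inl x) = true then some (r (Nat.find h) (Sum.inl x))
  else none

/-- `v ∈ f*_{a,h}(s)`: `v` is reachable from `s` in the digraph `G_{a,h}`. -/
def Reaches (a : Fin n → Fin m) (hsh : Fin m → Option (Fin n)) (s v : Fin n) : Prop :=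
  Relation.ReflTransGen (fun x y => hsh (a x) = some y) s v

/-- The second frequency moment `F₂(a)`. -/
def F2 (a : Fin n → Fin m) : ℕ :=
  ∑ i : Fin n, ∑ j : Fin n, if a i = a j then 1 else 0

/-! ### Index-vector combinatorics -/

/-- Equality of index vectors (only components `1..ℓ` matter). -/
def IdxEq (ℓ : ℕ) (k k' : ℕ → ℕ) : Prop := ∀ t, 1 ≤ t → t ≤ ℓ → k t = k' t

/-- The ordering `k < k'` on index vectors. -/
def IdxLt (ℓ : ℕ) (k k' : ℕ → ℕ) : Prop :=
  ∃ i, 1 ≤ i ∧ i ≤ ℓ ∧ k i < k' i ∧ ∀ t, i < t → t ≤ ℓ → k t = k' t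

/-- `k'` is an ancestor (index) of `k`. -/
def IsAncestorIdx (ℓ : ℕ) (k' k : ℕ → ℕ) : Prop :=
  ¬ IdxEq ℓ k' k ∧ ∃ i, 1 ≤ i ∧ i ≤ ℓ ∧ (∀ t, i < t → t ≤ ℓ → k' t = k t) ∧
    0 < k' i ∧ k' i ≤ k i ∧ ∀ t, 1 ≤ t → t < i → k' t = 0

/-- `k' ∈ P^k`: `k'` is `k` itself or an ancestor of `k`. -/
def InP (ℓ : ℕ) (k' k : ℕ → ℕ) : Prop := IdxEq ℓ k' k ∨ IsAncestorIdx ℓ k' k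

/-- `k'` is a level-`i` index. -/
def IsLevelIdx (ℓ i : ℕ) (k' : ℕ → ℕ) : Prop := 0 < k' i ∧ ∀ t, 1 ≤ t → t < i → k' t = 0

/-- A canonical index vector: zero outside `[1, ℓ]`. -/
def Canon (ℓ : ℕ) (k' : ℕ → ℕ) : Prop := ∀ t, t = 0 ∨ ℓ < t → k' t = 0

/-- `K_i`: the number of distinct level-`i` indices in `⋃_{k ∈ ks} P^k`. -/
def Kcount (ℓ : ℕ) (ks : List (ℕ → ℕ)) (i : ℕ) : ℕ :=
  Set.ncard {k' : ℕ → ℕ | Canon ℓ k' ∧ IsLevelIdx ℓ i k' ∧ ∃ k ∈ ks, InP ℓ k' k}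

/-- The rank (`1`-based) of the level-`i` index `κ` among the level-`i` indices of
`⋃_{k ∈ ks} P^k`, in increasing `<`-order. -/
def rankOf (ℓ : ℕ) (ks : List (ℕ → ℕ)) (i : ℕ) (κ : ℕ → ℕ) : ℕ :=
  Set.ncard {κ' : ℕ → ℕ |
    Canon ℓ κ' ∧ IsLevelIdx ℓ i κ' ∧ (∃ k ∈ ks, InP ℓ κ' k) ∧ IdxLt ℓ κ' κ} + 1

/-- Interpret a vector `k ∈ ℕ^ℓ` as a (canonical) index vector on levels `1..ℓ`. -/
def toIdx (ℓ : ℕ) (k : Fin ℓ → ℕ) : ℕ → ℕ :=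
  fun t => if h : 1 ≤ t ∧ t ≤ ℓ then k ⟨t - 1, by omega⟩ else 0

/-- The truncation `k^{i,j} = (0, …, 0, j, k_{i+1}, …, k_ℓ)`, indexing `μ^k_{i,j}`. -/
def truncIdx (k : ℕ → ℕ) (i j : ℕ) : ℕ → ℕ :=
  fun t => if t = i then j else if i < t then k t else 0

/-! ### The probability space -/

/-- The sample space: the functions `g_i`, `r_i` (on the star-extended domain) together
with the starting vertex `s`. -/
abbrev Sample (m n : ℕ) : Type := (ℕ → Dom m → Bool) × (ℕ → Dom m → Fin n) × Fin n

def gOf (ω : Sample m n) : ℕ → Dom m → Bool := ω.1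

def rOf (ω : Sample m n) : ℕ → Dom m → Fin n := ω.2.1

def sOf (ω : Sample m n) : Fin n := ω.2.2

/-- `P` is an admissible joint distribution of `(g, r, s)`: the starting vertex `s` is
uniform on `[n]`; each `g_i` (resp. `r_i`) is `τ`-wise independent and uniform on the
base domain, with fully independent uniform values on the stars; and all of
`g_1, …, g_ℓ, r_1, …, r_ℓ, s` are mutually independent.  This is expressed by requiring
that every admissible cylinder event has the correct product probability. -/
def GoodMeasure (ℓ τ : ℕ) (P : Measure (Sample m n)) : Prop :=
  ∀ (S T : Finset (ℕ × Dom m)) (vg : ℕ × Dom m → Bool) (vr : ℕ × Dom m → Fin n)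
    (s₀ : Fin n),
    (∀ q ∈ S, 1 ≤ q.1 ∧ q.1 ≤ ℓ) → (∀ q ∈ T, 1 ≤ q.1 ∧ q.1 ≤ ℓ) →
    (∀ i, (S.filter fun q => q.1 = i ∧ q.2.isLeft = true).card ≤ τ) →
    (∀ i, (T.filter fun q => q.1 = i ∧ q.2.isLeft = true).card ≤ τ) →
    P {ω : Sample m n |
        (∀ q ∈ S, gOf ω q.1 q.2 = vg q) ∧ (∀ q ∈ T, rOf ω q.1 q.2 = vr q) ∧ sOf ω = s₀} =
      (2 : ℝ≥0∞)⁻¹ ^ S.card * ((n : ℝ≥0∞))⁻¹ ^ T.card * (n : ℝ≥0∞)⁻¹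

/-! ### Events for the dependency tree -/

/-- The node indexed by `κ` exists in the dependency tree of the extended walk and its
`next`-value is `v`. -/
def NodeP (a : Fin n → Fin m) (ℓ : ℕ) (κ : ℕ → ℕ) (v : Fin n) (ω : Sample m n) : Prop :=
  ∃ w, extWalk a (gOf ω) (rOf ω) ℓ (sOf ω) = some w ∧
    ∃ μ, HasIdx ℓ (levelOf ℓ (gOf ω) w) w.length μ κ ∧ nextAt w μ = some v

/-- The event `F^{k,b}_{I,J}` (for the extended walk). -/
def Fev (a : Fin n → Fin m) (ℓ : ℕ) (k : ℕ → ℕ) (b : ℕ → ℕ → Fin n) (I J : ℕ)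
    (ω : Sample m n) : Prop :=
  (∀ i j, I < i → i ≤ ℓ → 1 ≤ j → j ≤ k i → NodeP a ℓ (truncIdx k i j) (b i j) ω) ∧
  ∀ j, 1 ≤ j → j ≤ J → NodeP a ℓ (truncIdx k I j) (b I j) ω

/-- The event fixing `g_1, …, g_{i-1}` and `r_1, …, r_{i-1}`. -/
def FixEv (i : ℕ) (gf : ℕ → Dom m → Bool) (rf : ℕ → Dom m → Fin n) : Set (Sample m n) :=
  {ω | ∀ t, 1 ≤ t → t < i → gOf ω t = gf t ∧ rOf ω t = rf t}

/-- The node indexed by `κ` exists in the dependency tree of the relaxed extended walk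
`w^{k¹,k²}` and its `next`-value is `v`. -/
def RNodeP (a : Fin n → Fin m) (ℓ : ℕ) (k1 k2 κ : ℕ → ℕ) (v : Fin n) (ω : Sample m n) :
    Prop :=
  ∃ w, extRWalk a (gOf ω) (rOf ω) ℓ k1 k2 (sOf ω) = some w ∧
    ∃ μ, HasIdx ℓ (levelOf ℓ (gOf ω) w) w.length μ κ ∧ nextAt w μ = some v

/-- The event `F^{K,b}_{I,J}` for `K = {k¹, k²}` (for the relaxed extended walk):
for every level `i ∈ [1, ℓ]` and every level-`i` index `κ` of `P^{k¹} ∪ P^{k²}` of rank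
`j`, if `i > I`, or `i = I` and `j ≤ J`, then `μ^K_{i,j}` exists and `next(μ^K_{i,j}) = b_{i,j}`. -/
def FevK (a : Fin n → Fin m) (ℓ : ℕ) (k1 k2 : ℕ → ℕ) (b : ℕ → ℕ → Fin n) (I J : ℕ)
    (ω : Sample m n) : Prop :=
  ∀ i κ, 1 ≤ i → i ≤ ℓ → Canon ℓ κ → IsLevelIdx ℓ i κ → (InP ℓ κ k1 ∨ InP ℓ κ k2) →
    (I < i ∨ (i = I ∧ rankOf ℓ [k1, k2] i κ ≤ J)) →
    RNodeP a ℓ k1 k2 κ (b i (rankOf ℓ [k1, k2] i κ)) ω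

/-! Among all pairs of duplicates, take one for which the multiset of levels on the union of the
three paths is minimal in the Dershowitz–Manna order. If two of the three paths collided in nodes
`γ` and `δ`, at least one of them, say `γ`, would not lie on the path to `φ - 1`. A base value
`a(γ) = a(δ)` makes `(γ, δ)` a duplicate; a star at level `i` is used only after two nodes of level
`i` have repeated a value, and no node of larger level has intervened. So in either case there is
a duplicate pair at the level of `γ` on the path to `γ` or to `δ`. Passing to it removes `γ` from
the union of the paths and adds only nodes of smaller level, contradicting minimality. -/

/-! ### Paths in the dependency tree -/

namespace OnPath

variable {lvl : ℕ → ℕ} {x y z : ℕ}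

theorem refl (x : ℕ) : OnPath lvl x x :=
  ⟨le_rfl, fun _ h h' => absurd h' h.not_ge⟩

theorem trans (hxy : OnPath lvl x y) (hyz : OnPath lvl y z) : OnPath lvl x z := by
  refine ⟨hxy.1.trans hyz.1, fun ρ hxρ hρz => ?_⟩
  rcases le_or_gt ρ y with hρy | hyρ
  · exact hxy.2 ρ hxρ hρy
  · have hρ : lvl ρ ≤ lvl y := hyz.2 ρ hyρ hρz
    rcases hxy.1.eq_or_lt with rfl | hlt
    · exact hρ
    · exact hρ.trans (hxy.2 y hlt le_rfl)

theorem of_le (hx : OnPath lvl x z) (hxy : x ≤ y) (hyz : y ≤ z) : OnPath lvl x y :=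
  ⟨hxy, fun ρ hxρ hρy => hx.2 ρ hxρ (hρy.trans hyz)⟩

theorem of_pred (h : OnPath lvl x (y - 1)) (hlvl : lvl y ≤ lvl x) : OnPath lvl x y := by
  refine ⟨h.1.trans (Nat.sub_le y 1), fun ρ hxρ hρy => ?_⟩
  rcases hρy.eq_or_lt with rfl | hlt
  · exact hlvl
  · exact h.2 ρ hxρ (Nat.le_sub_one_of_lt hlt)

end OnPath

/-- The pair of nodes `(γ, δ)` is a collision between the paths to `P` and `Q`. -/
structure IsCollision (lvl : ℕ → ℕ) (av : ℕ → Option (Dom m)) (γ δ P Q : ℕ) : Prop where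
  left_onPath : OnPath lvl γ P
  left_not_onPath : ¬ OnPath lvl γ Q
  right_onPath : OnPath lvl δ Q
  right_not_onPath : ¬ OnPath lvl δ P
  lvl_eq : lvl γ = lvl δ
  av_eq : av γ = av δ

section Collisions

variable {lvl : ℕ → ℕ} {av : ℕ → Option (Dom m)} {γ δ P Q : ℕ}

theorem Collision.exists_isCollision (h : Collision lvl av P Q) :
    ∃ γ δ, IsCollision lvl av γ δ P Q :=
  have ⟨γ, δ, hγP, hγQ, hδQ, hδP, hlvl, hav⟩ := h
  ⟨γ, δ, hγP, hγQ, hδQ, hδP, hlvl, hav⟩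

namespace IsCollision

theorem symm (h : IsCollision lvl av γ δ P Q) : IsCollision lvl av δ γ Q P :=
  ⟨h.right_onPath, h.right_not_onPath, h.left_onPath, h.left_not_onPath, h.lvl_eq.symm,
    h.av_eq.symm⟩

theorem not_onPath_or_not_onPath (h : IsCollision lvl av γ δ P Q) (R : ℕ) :
    ¬ OnPath lvl γ R ∨ ¬ OnPath lvl δ R := by
  by_contra! hR
  obtain ⟨hγR, hδR⟩ := hR
  rcases le_total γ δ with hle | hle
  · exact h.left_not_onPath ((hγR.of_le hle hδR.1).trans h.right_onPath)
  · exact h.right_not_onPath ((hδR.of_le hle hγR.1).trans h.left_onPath)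

theorem left_mem_Ico (h : IsCollision lvl av γ δ P Q) (hroot : ∀ μ, lvl μ ≤ lvl 0) {N : ℕ}
    (hP : P < N) : γ ∈ Set.Ico 1 N := by
  refine ⟨Nat.one_le_iff_ne_zero.2 ?_, h.left_onPath.1.trans_lt hP⟩
  rintro rfl
  exact h.left_not_onPath ⟨Nat.zero_le Q, fun ρ _ _ => hroot ρ⟩

theorem ne (h : IsCollision lvl av γ δ P Q) : γ ≠ δ := by
  rintro rfl
  exact h.left_not_onPath h.right_onPath

theorem not_onPath_pred {z : ℕ} (h : IsCollision lvl av γ δ P Q) (hγ : 1 ≤ γ)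
    (hlvl : lvl z = lvl γ) (hz : OnPath lvl z γ ∨ OnPath lvl z δ) : ¬ OnPath lvl γ (z - 1) := by
  intro hγz
  rcases hz with hzγ | hzδ
  · have := hγz.1
    have := hzγ.1
    lia
  · exact h.left_not_onPath ((hγz.of_pred hlvl.le).trans (hzδ.trans h.right_onPath))

theorem onPath_or_onPath_of_onPath_pred {z ν : ℕ} (h : IsCollision lvl av γ δ P Q)
    (hz : OnPath lvl z γ ∨ OnPath lvl z δ) (hν : OnPath lvl ν (z - 1)) (hle : lvl z ≤ lvl ν) :
    OnPath lvl ν P ∨ OnPath lvl ν Q :=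
  hz.imp (fun hzγ => (hν.of_pred hle).trans (hzγ.trans h.left_onPath))
    fun hzδ => (hν.of_pred hle).trans (hzδ.trans h.right_onPath)

end IsCollision

end Collisions

/-- The set of nodes on the root-to-`μ` path. -/
def pathNodes (lvl : ℕ → ℕ) (μ : ℕ) : Finset ℕ :=
  (Finset.range (μ + 1)).filter fun ν => OnPath lvl ν μ

theorem mem_pathNodes {lvl : ℕ → ℕ} {ν μ : ℕ} : ν ∈ pathNodes lvl μ ↔ OnPath lvl ν μ := by
  simp only [pathNodes, Finset.mem_filter, Finset.mem_range, Nat.lt_succ_iff,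
    and_iff_right_iff_imp]
  exact And.left

/-- The levels, with multiplicity, of the nodes in the union of the paths to the members of `S`.
Compared in the Dershowitz–Manna order, this is the quantity that decreases when a pair of
duplicates with a collision is improved. -/
def pathLevels (lvl : ℕ → ℕ) (S : Finset ℕ) : Multiset ℕ :=
  (S.biUnion (pathNodes lvl)).val.map lvl

theorem isDershowitzMannaLT_map_val {ι α : Type*} [Preorder α] (f : ι → α) {S T : Finset ι} {c : ι}
    (hcT : c ∈ T) (hcS : c ∉ S) (h : ∀ x ∈ S, x ∉ T → f x < f c) :
    Multiset.IsDershowitzMannaLT (S.val.map f) (T.val.map f) := by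
  have split (A B : Finset ι) :
      A.val.map f = (A ∩ B).val.map f + (A \ B).val.map f := by
    rw [← Multiset.map_add, ← Finset.disjUnion_val _ _ (Finset.disjoint_sdiff_inter A B).symm,
      Finset.disjUnion_eq_union, Finset.union_comm, Finset.sdiff_union_inter]
  have hc : c ∈ T \ S := Finset.mem_sdiff.2 ⟨hcT, hcS⟩
  refine ⟨(S ∩ T).val.map f, (S \ T).val.map f, (T \ S).val.map f, ?_, split S T, ?_, ?_⟩
  · exact fun h0 => Multiset.notMem_zero _ (h0 ▸ Multiset.mem_map_of_mem f hc)
  · rw [Finset.inter_comm, ← split]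
  · intro y hy
    obtain ⟨x, hx, rfl⟩ := Multiset.mem_map.1 hy
    obtain ⟨hxS, hxT⟩ := Finset.mem_sdiff.1 hx
    exact ⟨f c, Multiset.mem_map_of_mem f hc, h x hxS hxT⟩

theorem isDershowitzMannaLT_pathLevels {lvl : ℕ → ℕ} {S T : Finset ℕ} {γ : ℕ}
    (hγT : ∃ P ∈ T, OnPath lvl γ P) (hγS : ∀ P ∈ S, ¬ OnPath lvl γ P)
    (h : ∀ P ∈ S, ∀ ν, OnPath lvl ν P → lvl γ ≤ lvl ν → ∃ Q ∈ T, OnPath lvl ν Q) :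
    (pathLevels lvl S).IsDershowitzMannaLT (pathLevels lvl T) := by
  have mem_union {U : Finset ℕ} {ν : ℕ} :
      ν ∈ U.biUnion (pathNodes lvl) ↔ ∃ P ∈ U, OnPath lvl ν P := by
    simp only [Finset.mem_biUnion, mem_pathNodes]
  refine isDershowitzMannaLT_map_val lvl (mem_union.2 hγT) ?_ fun ν hνS hνT => ?_
  · rw [mem_union]
    rintro ⟨P, hP, hγP⟩
    exact hγS P hP hγP
  · obtain ⟨P, hP, hνP⟩ := mem_union.1 hνS
    exact lt_of_not_ge fun hle => hνT (mem_union.2 (h P hP ν hνP hle))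

/-! ### Descent along collisions -/

/-- Any two distinct nodes `γ, δ ∈ [1, N)` with the same level and the same value are accompanied
by an `R`-related pair of nodes of that level, each lying on the path to `γ` or on the path to `δ`.
For the extended walk, `R` is the relation of being duplicates. -/
def CollisionsWitnessed (lvl : ℕ → ℕ) (av : ℕ → Option (Dom m)) (N : ℕ)
    (R : ℕ → ℕ → Prop) : Prop :=
  ∀ γ ∈ Set.Ico 1 N, ∀ δ ∈ Set.Ico 1 N, γ ≠ δ → lvl γ = lvl δ → av γ = av δ →
    ∃ x y, R x y ∧ ∀ z ∈ ({x, y} : Set ℕ), lvl z = lvl γ ∧ (OnPath lvl z γ ∨ OnPath lvl z δ)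

section Descent

variable {lvl : ℕ → ℕ} {av : ℕ → Option (Dom m)} {N : ℕ} {R : ℕ → ℕ → Prop}

theorem CollisionsWitnessed.exists_rel_pathLevels_lt_of_isCollision
    (hcol : CollisionsWitnessed lvl av N R) (hroot : ∀ μ, lvl μ ≤ lvl 0) {S : Finset ℕ}
    {φ P Q γ δ : ℕ} (hφ : φ ∈ S) (hP : P ∈ S) (hQ : Q ∈ S) (hPN : P < N) (hQN : Q < N)
    (h : IsCollision lvl av γ δ P Q) (hγφ : ¬ OnPath lvl γ φ) :
    ∃ x y, R x y ∧
      (pathLevels lvl {φ, x - 1, y - 1}).IsDershowitzMannaLT (pathLevels lvl S) := by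
  have hγ : γ ∈ Set.Ico 1 N := h.left_mem_Ico hroot hPN
  obtain ⟨x, y, hxy, hz⟩ := hcol γ hγ δ (h.symm.left_mem_Ico hroot hQN) h.ne h.lvl_eq h.av_eq
  have not_onPath : ∀ z ∈ ({x, y} : Set ℕ), ¬ OnPath lvl γ (z - 1) := fun z hzm =>
    h.not_onPath_pred hγ.1 (hz z hzm).1 (hz z hzm).2
  have onPath_S : ∀ z ∈ ({x, y} : Set ℕ), ∀ ν, OnPath lvl ν (z - 1) → lvl γ ≤ lvl ν →
      ∃ M ∈ S, OnPath lvl ν M := by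
    intro z hzm ν hν hle
    obtain ⟨hlvl, hpath⟩ := hz z hzm
    rcases h.onPath_or_onPath_of_onPath_pred hpath hν (hlvl.trans_le hle) with hνP | hνQ
    · exact ⟨P, hP, hνP⟩
    · exact ⟨Q, hQ, hνQ⟩
  refine ⟨x, y, hxy, isDershowitzMannaLT_pathLevels (γ := γ) ⟨P, hP, h.left_onPath⟩ ?_ ?_⟩
  · simp only [Finset.mem_insert, Finset.mem_singleton, forall_eq_or_imp, forall_eq]
    exact ⟨hγφ, not_onPath x (by simp), not_onPath y (by simp)⟩
  · simp only [Finset.mem_insert, Finset.mem_singleton, forall_eq_or_imp, forall_eq]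
    exact ⟨fun ν hν _ => ⟨φ, hφ, hν⟩, onPath_S x (by simp), onPath_S y (by simp)⟩

theorem CollisionsWitnessed.exists_rel_pathLevels_lt (hcol : CollisionsWitnessed lvl av N R)
    (hroot : ∀ μ, lvl μ ≤ lvl 0) {S : Finset ℕ} {φ P Q : ℕ} (hφ : φ ∈ S) (hP : P ∈ S) (hQ : Q ∈ S)
    (hPN : P < N) (hQN : Q < N) (h : Collision lvl av P Q) :
    ∃ x y, R x y ∧
      (pathLevels lvl {φ, x - 1, y - 1}).IsDershowitzMannaLT (pathLevels lvl S) := by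
  obtain ⟨γ, δ, h⟩ := h.exists_isCollision
  rcases h.not_onPath_or_not_onPath φ with hγφ | hδφ
  · exact hcol.exists_rel_pathLevels_lt_of_isCollision hroot hφ hP hQ hPN hQN h hγφ
  · exact hcol.exists_rel_pathLevels_lt_of_isCollision hroot hφ hQ hP hQN hPN h.symm hδφ

theorem CollisionsWitnessed.exists_rel_forall_not_collision (hcol : CollisionsWitnessed lvl av N R)
    (hroot : ∀ μ, lvl μ ≤ lvl 0) (hR : ∀ x y, R x y → x - 1 < N ∧ y - 1 < N)
    (hex : ∃ x y, R x y) {φ : ℕ} (hφ : φ < N) :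
    ∃ x y, R x y ∧ ∀ P ∈ ({φ, x - 1, y - 1} : Finset ℕ), ∀ Q ∈ ({φ, x - 1, y - 1} : Finset ℕ),
      ¬ Collision lvl av P Q := by
  let levels (p : ℕ × ℕ) : Multiset ℕ := pathLevels lvl {φ, p.1 - 1, p.2 - 1}
  obtain ⟨x₀, y₀, h₀⟩ := hex
  obtain ⟨⟨x, y⟩, hxy, hmin⟩ :=
    (InvImage.wf levels Multiset.wellFounded_isDershowitzMannaLT).has_min
      {p : ℕ × ℕ | R p.1 p.2} ⟨(x₀, y₀), h₀⟩
  have lt_N : ∀ P ∈ ({φ, x - 1, y - 1} : Finset ℕ), P < N := by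
    simp only [Finset.mem_insert, Finset.mem_singleton, forall_eq_or_imp, forall_eq]
    exact ⟨hφ, hR x y hxy⟩
  refine ⟨x, y, hxy, fun P hP Q hQ h => ?_⟩
  obtain ⟨x', y', hxy', hlt⟩ := hcol.exists_rel_pathLevels_lt hroot
    (Finset.mem_insert_self φ _) hP hQ (lt_N P hP) (lt_N Q hQ) h
  exact hmin (x', y') hxy' hlt

end Descent

/-! ### Levels of nodes -/

/-- The levels `i ≥ 1` at which the loop goes on after the node, i.e. `g_i(a_i(μ)) = 1`. -/
def activeLevels (g : ℕ → Dom m → Bool) (nd : Node m n) : Set ℕ :=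
  {i | 1 ≤ i ∧ ∃ y, nd.tag i = some y ∧ g i y = true}

/-- The node has level `i`, regardless of the walk it belongs to. -/
def HasLevel (g : ℕ → Dom m → Bool) (nd : Node m n) (i : ℕ) : Prop :=
  IsLeast (activeLevels g nd) i

/-- The node in which `a_i(μ)` is set to `y`. -/
def Node.withTag (nd : Node m n) (i : ℕ) (y : Dom m) : Node m n :=
  ⟨nd.vtx, fun t => if t = i then some y else nd.tag t⟩

theorem Node.withTag_tag_self (nd : Node m n) (i : ℕ) (y : Dom m) :
    (nd.withTag i y).tag i = some y :=
  if_pos rfl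

section NodeLevel

variable {g : ℕ → Dom m → Bool} {nd : Node m n} {i : ℕ} {y : Dom m}

theorem mem_activeLevels_withTag_self :
    i ∈ activeLevels g (nd.withTag i y) ↔ 1 ≤ i ∧ g i y = true := by
  simp only [activeLevels, Set.mem_ofPred_eq, Node.withTag_tag_self, Option.some.injEq,
    exists_eq_left']

theorem mem_activeLevels_withTag_of_ne {t : ℕ} (ht : t ≠ i) :
    t ∈ activeLevels g (nd.withTag i y) ↔ t ∈ activeLevels g nd := by
  simp only [activeLevels, Set.mem_ofPred_eq, Node.withTag, if_neg ht]

theorem hasLevel_withTag (hnd : ∀ t ∈ activeLevels g nd, i < t) (hy : g (i + 1) y = true) :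
    HasLevel g (nd.withTag (i + 1) y) (i + 1) := by
  refine ⟨mem_activeLevels_withTag_self.2 ⟨Nat.le_add_left 1 i, hy⟩, fun t ht => ?_⟩
  by_contra! hlt
  have := hnd t ((mem_activeLevels_withTag_of_ne hlt.ne).1 ht)
  lia

theorem lt_of_mem_activeLevels_withTag (hnd : ∀ t ∈ activeLevels g nd, i < t)
    (hy : g (i + 1) y = false) : ∀ t ∈ activeLevels g (nd.withTag (i + 1) y), i + 1 < t := by
  intro t ht
  rcases eq_or_ne t (i + 1) with rfl | hne
  · simp [mem_activeLevels_withTag_self, hy] at ht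
  · have := hnd t ((mem_activeLevels_withTag_of_ne hne).1 ht)
    lia

end NodeLevel

/-! ### Traces -/

/-- Two nodes of `l`, at different positions and both of level `i`, have the same `a`-value. -/
def HasRepeat (a : Fin n → Fin m) (g : ℕ → Dom m → Bool) (i : ℕ) (l : List (Node m n)) : Prop :=
  ∃ x y, [x, y].Sublist l ∧ HasLevel g x i ∧ HasLevel g y i ∧ a x.vtx = a y.vtx

/-- Every node of `l` has a level that is at most `i`. -/
def LevelsLE (g : ℕ → Dom m → Bool) (i : ℕ) (l : List (Node m n)) : Prop :=
  ∀ nd ∈ l, ∃ j ≤ i, HasLevel g nd j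

/-- A repeat at level `i` occurs in `l` after the last node of level above `i`; this is when the
level-`i` loop resorts to stars. -/
def HasRecentRepeat (a : Fin n → Fin m) (g : ℕ → Dom m → Bool) (i : ℕ) (l : List (Node m n)) :
    Prop :=
  ∃ t, t <:+ l ∧ LevelsLE g i t ∧ HasRepeat a g i t

/-- The value `a(μ)` of the last node `nd` of `l ++ [nd]`, which has level `i`, is explained: it is
the base value of the vertex unless a repeat has forced a star. -/
def Explained (a : Fin n → Fin m) (g : ℕ → Dom m → Bool) (i : ℕ) (l : List (Node m n))
    (nd : Node m n) : Prop :=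
  nd.tag i = some (Sum.inl (a nd.vtx)) ∨ HasRecentRepeat a g i (l ++ [nd])

/-- Lists of nodes of level at most `i` produced by the loops of level at most `i`. -/
inductive Trace (a : Fin n → Fin m) (g : ℕ → Dom m → Bool) (i : ℕ) : List (Node m n) → Prop
  | nil : Trace a g i []
  | snoc {l : List (Node m n)} {nd : Node m n} {j : ℕ} (hl : Trace a g i l) (hj : j ≤ i)
      (hnd : HasLevel g nd j) (hexp : Explained a g j l nd) : Trace a g i (l ++ [nd])

/-- The output of a level-`i` walk: a trace followed by a node at which all loops of level at most
`i` exit. -/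
def IsCompleteTrace (a : Fin n → Fin m) (g : ℕ → Dom m → Bool) (i : ℕ) (w : List (Node m n)) :
    Prop :=
  ∃ l nd, w = l ++ [nd] ∧ Trace a g i l ∧ ∀ t ∈ activeLevels g nd, i < t

section Trace

variable {a : Fin n → Fin m} {g : ℕ → Dom m → Bool} {i : ℕ} {l l' : List (Node m n)}
  {nd : Node m n}

theorem HasRepeat.append_right (h : HasRepeat a g i l) (l' : List (Node m n)) :
    HasRepeat a g i (l ++ l') := by
  obtain ⟨x, y, hxy, h⟩ := h
  exact ⟨x, y, hxy.trans (List.sublist_append_left l l'), h⟩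

theorem Explained.append_left (h : Explained a g i l' nd) (l : List (Node m n)) :
    Explained a g i (l ++ l') nd := by
  refine h.imp_right fun ⟨t, ht, h⟩ => ⟨t, ?_, h⟩
  rw [List.append_assoc]
  exact List.suffix_append_of_suffix ht

namespace Trace

theorem append (hl : Trace a g i l) (hl' : Trace a g i l') : Trace a g i (l ++ l') := by
  induction hl' with
  | nil => rwa [List.append_nil]
  | snoc _ hj hnd hexp ih =>
    rw [← List.append_assoc]
    exact ih.snoc hj hnd (hexp.append_left l)

theorem mono {j : ℕ} (hij : i ≤ j) (hl : Trace a g i l) : Trace a g j l := by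
  induction hl with
  | nil => exact .nil
  | snoc _ hk hnd hexp ih => exact ih.snoc (hk.trans hij) hnd hexp

theorem exists_explained (hl : Trace a g i l) {p : ℕ} (hp : l[p]? = some nd) :
    ∃ j ≤ i, HasLevel g nd j ∧ Explained a g j (l.take p) nd := by
  induction hl with
  | nil => simp at hp
  | @snoc l x j _ hj hx hexp ih =>
    rcases lt_or_ge p l.length with hlt | hge
    · rw [List.getElem?_append_left hlt] at hp
      rw [List.take_append_of_le_length hlt.le]
      exact ih hp
    · rw [List.getElem?_append_right hge] at hp
      obtain ⟨h0, rfl⟩ := List.getElem?_eq_some_iff.1 hp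
      obtain rfl : p = l.length := by rw [List.length_singleton] at h0; lia
      rw [List.take_left]
      simpa using ⟨j, hj, hx, hexp⟩

theorem levelsLE (hl : Trace a g i l) : LevelsLE g i l := fun _ hnd =>
  have ⟨_, hp⟩ := List.mem_iff_getElem?.1 hnd
  have ⟨j, hj, hlev, _⟩ := hl.exists_explained hp
  ⟨j, hj, hlev⟩

end Trace

end Trace

/-! ### The loop invariant -/

/-- State of the level-`i` loop: base elements of `C` stem from level-`i` nodes produced so far, and
stars are in use only after a repeat. -/
structure LoopInv (a : Fin n → Fin m) (g : ℕ → Dom m → Bool) (i : ℕ) (C : Finset (Dom m))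
    (star : Bool) (acc : List (Node m n)) : Prop where
  trace : Trace a g i acc
  visited : ∀ x, (Sum.inl x : Dom m) ∈ C → ∃ nd ∈ acc, HasLevel g nd i ∧ a nd.vtx = x
  hasRepeat : star = true → HasRepeat a g i acc

namespace LoopInv

variable {a : Fin n → Fin m} {g : ℕ → Dom m → Bool} {i : ℕ} {C : Finset (Dom m)} {star : Bool}
  {acc l : List (Node m n)} {nd : Node m n}

theorem empty : LoopInv a g i ∅ false [] where
  trace := .nil
  visited _ hx := absurd hx (Finset.notMem_empty _)
  hasRepeat h := absurd h Bool.false_ne_true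

theorem append (h : LoopInv a g i C star acc) (hl : Trace a g i l) :
    LoopInv a g i C star (acc ++ l) where
  trace := h.trace.append hl
  visited x hx := by
    obtain ⟨nd, hnd, hx⟩ := h.visited x hx
    exact ⟨nd, List.mem_append_left l hnd, hx⟩
  hasRepeat hstar := (h.hasRepeat hstar).append_right l

theorem hasRepeat_snoc (h : LoopInv a g i C star acc) (hnd : HasLevel g nd i)
    (hbase : ¬ (star = false ∧ (Sum.inl (a nd.vtx) : Dom m) ∉ C)) :
    HasRepeat a g i (acc ++ [nd]) := by
  rcases Bool.eq_false_or_eq_true star with hstar | hstar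
  · exact (h.hasRepeat hstar).append_right [nd]
  · obtain ⟨x, hx, hlev, heq⟩ := h.visited _ (not_not.1 (not_and.1 hbase hstar))
    exact ⟨x, nd, (List.singleton_sublist.2 hx).append (List.Sublist.refl [nd]), hlev, hnd, heq⟩

theorem snoc (h : LoopInv a g i C star acc) (hnd : HasLevel g nd i) {y : Dom m} {star' : Bool}
    (hy : nd.tag i = some y)
    (hnew : y = Sum.inl (a nd.vtx) ∧ star' = false ∨
      y.isRight = true ∧ HasRepeat a g i (acc ++ [nd])) :
    LoopInv a g i (insert y C) star' (acc ++ [nd]) := by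
  have hlast : LevelsLE g i (acc ++ [nd]) := by
    intro x hx
    rcases List.mem_append.1 hx with hx | hx
    · exact h.trace.levelsLE x hx
    · exact ⟨i, le_rfl, List.mem_singleton.1 hx ▸ hnd⟩
  refine ⟨h.trace.snoc le_rfl hnd ?_, fun x hx => ?_, fun hstar => ?_⟩
  · rcases hnew with ⟨rfl, -⟩ | ⟨-, hrep⟩
    · exact .inl hy
    · exact .inr ⟨acc ++ [nd], List.suffix_rfl, hlast, hrep⟩
  · rcases Finset.mem_insert.1 hx with rfl | hx
    · rcases hnew with ⟨hbase, -⟩ | ⟨hright, -⟩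
      · exact ⟨nd, by simp, hnd, (Sum.inl.inj hbase).symm⟩
      · simp at hright
    · obtain ⟨z, hz, hzx⟩ := h.visited x hx
      exact ⟨z, List.mem_append_left _ hz, hzx⟩
  · rcases hnew with ⟨-, hfalse⟩ | ⟨-, hrep⟩
    · simp [hfalse] at hstar
    · exact hrep

theorem isCompleteTrace_loopF {r : ℕ → Dom m → Fin n} {sub : Fin n → Option (List (Node m n))}
    (hsub : ∀ s l, sub s = some l → IsCompleteTrace a g i l) {fuel : ℕ} {s : Fin n}
    {w : List (Node m n)} (h : LoopInv a g (i + 1) C star acc)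
    (hw : loopF a g r sub (i + 1) fuel C star s acc = some w) :
    IsCompleteTrace a g (i + 1) w := by
  induction fuel generalizing C star s acc with
  | zero => simp [loopF] at hw
  | succ fuel ih =>
    rw [loopF] at hw
    cases hs : sub s with
    | none => simp [hs] at hw
    | some subw =>
      obtain ⟨l, nd, rfl, hl, hnd⟩ := hsub s subw hs
      simp only [hs, List.getLast?_append, List.getLast?_singleton, Option.some_or,
        List.dropLast_concat] at hw
      set base : Prop := star = false ∧ (Sum.inl (a nd.vtx) : Dom m) ∉ C
      set y : Dom m := if base then Sum.inl (a nd.vtx) else Sum.inr (freshStar C) with hy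
      change (if g (i + 1) y = true then _ else some (acc ++ l ++ [nd.withTag (i + 1) y])) = _ at hw
      have hacc : LoopInv a g (i + 1) C star (acc ++ l) := h.append (hl.mono i.le_succ)
      by_cases hg : g (i + 1) y = true
      · rw [if_pos hg] at hw
        have hlev : HasLevel g (nd.withTag (i + 1) y) (i + 1) := hasLevel_withTag hnd hg
        refine ih (hacc.snoc hlev (nd.withTag_tag_self (i + 1) y) ?_) hw
        by_cases hb : base
        · exact .inl ⟨if_pos hb, if_pos hb⟩
        · exact .inr ⟨by simp [hy, hb], hacc.hasRepeat_snoc hlev hb⟩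
      · rw [if_neg hg] at hw
        exact ⟨acc ++ l, _, (Option.some.inj hw).symm, hacc.trace,
          lt_of_mem_activeLevels_withTag hnd (Bool.eq_false_of_not_eq_true hg)⟩

end LoopInv

theorem isCompleteTrace_walkF {a : Fin n → Fin m} {g : ℕ → Dom m → Bool} {r : ℕ → Dom m → Fin n}
    {i fuel : ℕ} {s : Fin n} {w : List (Node m n)} (hw : walkF a g r fuel i s = some w) :
    IsCompleteTrace a g i w := by
  induction i generalizing fuel s w with
  | zero =>
    rw [walkF] at hw
    exact ⟨[], _, (Option.some.inj hw).symm, .nil, fun t ht => ht.1⟩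
  | succ i ih =>
    cases fuel with
    | zero => simp [walkF] at hw
    | succ fuel =>
      rw [walkF] at hw
      exact LoopInv.empty.isCompleteTrace_loopF (fun s l hl => ih hl) hw

theorem isCompleteTrace_extWalk {a : Fin n → Fin m} {g : ℕ → Dom m → Bool}
    {r : ℕ → Dom m → Fin n} {ℓ : ℕ} {s : Fin n} {w : List (Node m n)}
    (hw : extWalk a g r ℓ s = some w) : IsCompleteTrace a g ℓ w := by
  unfold extWalk at hw
  split_ifs at hw
  exact isCompleteTrace_walkF hw

/-! ### Duplicates in the walk -/

/-- The positions `α ≠ β` of `w` carry vertices with the same `a`-value. -/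
def IsDuplicate (a : Fin n → Fin m) (w : List (Node m n)) (α β : ℕ) : Prop :=
  α ≠ β ∧ ∃ x y, vtxAt w α = some x ∧ vtxAt w β = some y ∧ a x = a y

section Positions

variable {ℓ : ℕ} {a : Fin n → Fin m} {g : ℕ → Dom m → Bool} {w : List (Node m n)} {p i : ℕ}
  {nd : Node m n}

theorem levelOf_le (μ : ℕ) : levelOf ℓ g w μ ≤ ℓ + 1 := by
  unfold levelOf
  split_ifs with h
  · exact (Nat.find_spec h).1.2.trans ℓ.le_succ
  · exact le_rfl

theorem levelOf_zero : levelOf ℓ g w 0 = ℓ + 1 :=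
  dif_neg fun ⟨_, _, _, hy, _⟩ => by simp [tagAt] at hy

theorem mem_Icc_of_vtxAt_eq_some {μ : ℕ} {v : Fin n} (h : vtxAt w μ = some v) :
    μ ∈ Set.Icc 1 w.length := by
  unfold vtxAt at h
  split_ifs at h with h0
  obtain ⟨nd, hnd, -⟩ := Option.map_eq_some_iff.1 h
  have := (List.getElem?_eq_some_iff.1 hnd).1
  exact ⟨by lia, by lia⟩

theorem vtxAt_succ (hp : w[p]? = some nd) : vtxAt w (p + 1) = some nd.vtx := by
  simp [vtxAt, hp]

theorem tagAt_succ (hp : w[p]? = some nd) (i : ℕ) : tagAt w (p + 1) i = nd.tag i := by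
  simp [tagAt, hp]

theorem levelOf_succ (hp : w[p]? = some nd) (hnd : HasLevel g nd i) (hi : i ≤ ℓ) :
    levelOf ℓ g w (p + 1) = i := by
  obtain ⟨⟨hpos, hact⟩, hmin⟩ := hnd
  have hex : (1 ≤ i ∧ i ≤ ℓ) ∧ ∃ y, tagAt w (p + 1) i = some y ∧ g i y = true := by
    simpa only [tagAt_succ hp] using ⟨⟨hpos, hi⟩, hact⟩
  unfold levelOf
  rw [dif_pos ⟨i, hex⟩, Nat.find_eq_iff]
  refine ⟨hex, fun t ht ⟨⟨htpos, _⟩, h⟩ => ht.not_ge (hmin ⟨htpos, ?_⟩)⟩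
  simpa only [tagAt_succ hp] using h

theorem aAt_succ (hp : w[p]? = some nd) (hnd : HasLevel g nd i) (hi : i ≤ ℓ) :
    aAt ℓ g w (p + 1) = nd.tag i := by
  rw [aAt, levelOf_succ hp hnd hi, tagAt_succ hp]

theorem HasRecentRepeat.exists_isDuplicate (h : HasRecentRepeat a g i (w.take p)) (hi : i ≤ ℓ)
    (hp : p ≤ w.length) : ∃ ν κ, IsDuplicate a w ν κ ∧
      ∀ z ∈ ({ν, κ} : Set ℕ), levelOf ℓ g w z = i ∧ OnPath (levelOf ℓ g w) z p := by
  obtain ⟨t, ⟨v, hvt⟩, hle, x, y, hsub, hx, hy, hxy⟩ := h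
  have hlen : v.length + t.length = p := by
    rw [← List.length_append, hvt, List.length_take_of_le hp]
  have getElem?_of_tail {q : ℕ} {nd : Node m n} (hq : t[q]? = some nd) :
      w[v.length + q]? = some nd := by
    have hqt : q < t.length := (List.getElem?_eq_some_iff.1 hq).1
    rw [← List.getElem?_take_of_lt (show v.length + q < p by lia), ← hvt,
      List.getElem?_append_right (Nat.le_add_right _ _), Nat.add_sub_cancel_left, hq]
  have level_and_onPath {q : ℕ} {nd : Node m n} (hq : t[q]? = some nd) (hnd : HasLevel g nd i) :
      levelOf ℓ g w (v.length + q + 1) = i ∧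
        OnPath (levelOf ℓ g w) (v.length + q + 1) p := by
    have hlev := levelOf_succ (getElem?_of_tail hq) hnd hi
    have hqt : q < t.length := (List.getElem?_eq_some_iff.1 hq).1
    refine ⟨hlev, by lia, fun ρ hqρ hρp => ?_⟩
    obtain ⟨k, rfl⟩ := Nat.exists_eq_add_of_lt hqρ
    have hk : q + 1 + k < t.length := by lia
    obtain ⟨j, hj, hlevj⟩ := hle _ (List.getElem_mem hk)
    have := levelOf_succ (getElem?_of_tail (List.getElem?_eq_getElem hk)) hlevj (hj.trans hi)
    rw [hlev, show v.length + q + 1 + k + 1 = v.length + (q + 1 + k) + 1 by lia, this]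
    exact hj
  obtain ⟨f, hf⟩ := List.sublist_iff_exists_orderEmbedding_getElem?_eq.1 hsub
  have hfx : t[f 0]? = some x := (hf 0).symm
  have hfy : t[f 1]? = some y := (hf 1).symm
  have hne : f 0 ≠ f 1 := f.injective.ne Nat.zero_ne_one
  refine ⟨v.length + f 0 + 1, v.length + f 1 + 1, ⟨by lia, x.vtx, y.vtx,
    vtxAt_succ (getElem?_of_tail hfx), vtxAt_succ (getElem?_of_tail hfy), hxy⟩, ?_⟩
  rintro z (rfl | rfl)
  · exact level_and_onPath hfx hx
  · exact level_and_onPath hfy hy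

theorem IsCompleteTrace.aAt_eq_base_or_exists_isDuplicate (hw : IsCompleteTrace a g ℓ w) {μ : ℕ}
    (hμ : μ ∈ Set.Ico 1 w.length) :
    (∃ x, vtxAt w μ = some x ∧ aAt ℓ g w μ = some (Sum.inl (a x))) ∨
      ∃ ν κ, IsDuplicate a w ν κ ∧
        ∀ z ∈ ({ν, κ} : Set ℕ),
          levelOf ℓ g w z = levelOf ℓ g w μ ∧ OnPath (levelOf ℓ g w) z μ := by
  obtain ⟨l, last, rfl, hl, -⟩ := hw
  obtain ⟨hpos, hlt⟩ := hμ
  obtain ⟨p, rfl⟩ := Nat.exists_eq_add_of_le' hpos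
  have hpl : p < l.length := by
    rw [List.length_append, List.length_singleton] at hlt
    lia
  have hpl' : l[p]? = some l[p] := List.getElem?_eq_getElem hpl
  have hpw : (l ++ [last])[p]? = some l[p] := by rw [List.getElem?_append_left hpl, hpl']
  obtain ⟨j, hj, hlev, hbase | hrep⟩ := hl.exists_explained hpl'
  · exact .inl ⟨l[p].vtx, vtxAt_succ hpw, by rw [aAt_succ hpw hlev hj, hbase]⟩
  · right
    rw [levelOf_succ hpw hlev hj]
    refine HasRecentRepeat.exists_isDuplicate ?_ hj hlt.le
    rwa [List.take_append_of_le_length hpl, ← List.take_concat_get' l p hpl]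

theorem IsCompleteTrace.collisionsWitnessed (hw : IsCompleteTrace a g ℓ w) :
    CollisionsWitnessed (levelOf ℓ g w) (aAt ℓ g w) w.length (IsDuplicate a w) := by
  intro γ hγ δ hδ hne hlvl hav
  rcases hw.aAt_eq_base_or_exists_isDuplicate hγ with ⟨x, hx, hγx⟩ | ⟨ν, κ, hνκ, hz⟩
  · rcases hw.aAt_eq_base_or_exists_isDuplicate hδ with ⟨y, hy, hδy⟩ | ⟨ν, κ, hνκ, hz⟩
    · have hxy : a x = a y := Sum.inl.inj (Option.some.inj (hγx.symm.trans (hav.trans hδy)))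
      refine ⟨γ, δ, ⟨hne, x, y, hx, hy, hxy⟩, ?_⟩
      rintro z (rfl | rfl)
      · exact ⟨rfl, .inl (.refl z)⟩
      · exact ⟨hlvl.symm, .inr (.refl z)⟩
    · exact ⟨ν, κ, hνκ, fun z hzm => ⟨(hz z hzm).1.trans hlvl.symm, .inr (hz z hzm).2⟩⟩
  · exact ⟨ν, κ, hνκ, fun z hzm => ⟨(hz z hzm).1, .inl (hz z hzm).2⟩⟩

theorem IsDuplicate.mem_Icc {α β : ℕ} (h : IsDuplicate a w α β) :
    α ∈ Set.Icc 1 w.length ∧ β ∈ Set.Icc 1 w.length :=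
  have ⟨_, _, _, hx, hy, _⟩ := h
  ⟨mem_Icc_of_vtxAt_eq_some hx, mem_Icc_of_vtxAt_eq_some hy⟩

end Positions

/-- Lemma 5.12: structure of bad cases for the extended walk. -/
theorem statement_10 (ℓ m n : ℕ) (hℓ : 0 < ℓ) (hm : 0 < m) (hn : 0 < n)
    (a : Fin n → Fin m) (g : ℕ → Dom m → Bool) (r : ℕ → Dom m → Fin n) (s : Fin n)
    (w : List (Node m n)) (hw : extWalk a g r ℓ s = some w)
    (hdup : ∃ α β x y, 1 ≤ α ∧ α ≤ w.length ∧ 1 ≤ β ∧ β ≤ w.length ∧ α ≠ β ∧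
      vtxAt w α = some x ∧ vtxAt w β = some y ∧ a x = a y) :
    ∀ φ, 1 ≤ φ → φ ≤ w.length →
      ∃ α β x y, 1 ≤ α ∧ α ≤ w.length ∧ 1 ≤ β ∧ β ≤ w.length ∧ α ≠ β ∧
        vtxAt w α = some x ∧ vtxAt w β = some y ∧ a x = a y ∧
        ¬ Collision (levelOf ℓ g w) (aAt ℓ g w) (φ - 1) (α - 1) ∧
        ¬ Collision (levelOf ℓ g w) (aAt ℓ g w) (φ - 1) (β - 1) ∧
        ¬ Collision (levelOf ℓ g w) (aAt ℓ g w) (α - 1) (β - 1) := by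
  intro φ hφ₁ hφ
  have hdup' : ∃ α β, IsDuplicate a w α β := by
    obtain ⟨α, β, x, y, -, -, -, -, hne, hx, hy, hxy⟩ := hdup
    exact ⟨α, β, hne, x, y, hx, hy, hxy⟩
  have pred_lt : ∀ α β, IsDuplicate a w α β → α - 1 < w.length ∧ β - 1 < w.length := by
    intro α β h
    obtain ⟨⟨hα₁, hα⟩, hβ₁, hβ⟩ := h.mem_Icc
    exact ⟨by lia, by lia⟩
  obtain ⟨α, β, hαβ, hfree⟩ :=
    (isCompleteTrace_extWalk hw).collisionsWitnessed.exists_rel_forall_not_collision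
      (fun μ => levelOf_zero (g := g) (w := w) ▸ levelOf_le μ) pred_lt hdup'
      (show φ - 1 < w.length by lia)
  obtain ⟨⟨hα₁, hα⟩, hβ₁, hβ⟩ := hαβ.mem_Icc
  obtain ⟨hne, x, y, hx, hy, hxy⟩ := hαβ
  exact ⟨α, β, x, y, hα₁, hα, hβ₁, hβ, hne, hx, hy, hxy, hfree _ (by simp) _ (by simp),
    hfree _ (by simp) _ (by simp), hfree _ (by simp) _ (by simp)⟩

end EDW
end
end

section
/- Let n be sufficiently large, let ℓ be an integer with 2 ≤ ℓ < log₂ n, and let τ = 20·log₂ n·log₂ log₂ n. Then Σ_{(k¹,k²) ∈ (K^short)², k¹ ≠ k²} ∏_{i=1}^ℓ 2^{−K_i} ≥ 2^{2ℓ−1}, where for each pair (k¹, k²) the quantity K_i denotes the number of distinct level-i indices in P^{k¹} ∪ P^{k²}. -/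
open MeasureTheory
open scoped Classical ENNReal

noncomputable section

namespace EDW

variable {m n : ℕ}

/-!
The level-`i` indices of `P^k` are the `k_i` vectors `(0, …, 0, j, k_{i+1}, …, k_ℓ)` with
`1 ≤ j ≤ k_i`. For a pair this gives `K_i ≤ k¹_i + k²_i`, and at the top level, where nothing
remains above `j`, the two families are nested, so `K_ℓ ≤ max (k¹_ℓ, k²_ℓ)`. Keep only the pairs
with `k¹_ℓ ≠ k²_ℓ`. With entries in `{0, …, T}` the sum then factors over the levels: each level
below the top contributes `(∑ 2^{-a})² = 4 (1 - 2^{-(T+1)})²` and the top level contributes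
`∑_{a ≠ b} 2^{-max (a, b)} ≥ 11/4` for `T ≥ 3`. By Bernoulli's inequality the error factor
`(1 - 2^{-(T+1)})^{2(ℓ-1)}` is at least `3/4` once `4 ℓ ≤ 2^T`,
and `4^{ℓ-1} · 3/4 · 11/4 ≥ 2^{2ℓ-1}`.
-/

section LevelIndices

variable {ℓ i : ℕ} {k k₁ k₂ k' : ℕ → ℕ}

theorem IsLevelIdx.mem_Icc (hl : IsLevelIdx ℓ i k) (hc : Canon ℓ k) : i ∈ Finset.Icc 1 ℓ := by
  by_contra hi
  have hki : k i = 0 := hc i (by rw [Finset.mem_Icc] at hi; omega)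
  exact hl.1.ne' hki

theorem IsLevelIdx.ext (hl₁ : IsLevelIdx ℓ i k₁) (hl₂ : IsLevelIdx ℓ i k₂) (hc₁ : Canon ℓ k₁)
    (hc₂ : Canon ℓ k₂) (h : ∀ t, i ≤ t → t ≤ ℓ → k₁ t = k₂ t) : k₁ = k₂ := by
  funext t
  by_cases hout : t = 0 ∨ ℓ < t
  · rw [hc₁ t hout, hc₂ t hout]
  · rcases lt_or_ge t i with hti | hti
    · rw [hl₁.2 t (by omega) hti, hl₂.2 t (by omega) hti]
    · exact h t hti (by omega)

theorem InP.apply_le_and_eq_above (hp : InP ℓ k' k) (hl : IsLevelIdx ℓ i k')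
    (hi : i ∈ Finset.Icc 1 ℓ) : k' i ≤ k i ∧ ∀ t, i < t → t ≤ ℓ → k' t = k t := by
  obtain ⟨hi₁, hiℓ⟩ := Finset.mem_Icc.1 hi
  rcases hp with heq | ⟨-, j, hj₁, -, habove, hpos, hle, hbelow⟩
  · exact ⟨(heq i hi₁ hiℓ).le, fun t hit htℓ ↦ heq t (by omega) htℓ⟩
  · obtain rfl : i = j := by
      rcases lt_trichotomy i j with hij | hij | hij
      · exact absurd (hbelow i hi₁ hij) hl.1.ne'
      · exact hij
      · exact absurd (hl.2 j hj₁ hij) hpos.ne'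
    exact ⟨hle, habove⟩

theorem Kcount_le_of_eq_above {ks : List (ℕ → ℕ)} {M : ℕ} (hM : ∀ k ∈ ks, k i ≤ M)
    (habove : ∀ k₁ ∈ ks, ∀ k₂ ∈ ks, ∀ t, i < t → t ≤ ℓ → k₁ t = k₂ t) :
    Kcount ℓ ks i ≤ M := by
  -- A level-`i` index is determined by its `i`-th entry and the entries above it.
  calc Kcount ℓ ks i ≤ (Finset.Icc 1 M : Set ℕ).ncard := by
        refine Set.ncard_le_ncard_of_injOn (fun κ ↦ κ i) ?_ ?_ (Finset.finite_toSet _)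
        · rintro κ ⟨hc, hl, k, hk, hp⟩
          exact Finset.mem_coe.2 <| Finset.mem_Icc.2
            ⟨hl.1, (hp.apply_le_and_eq_above hl (hl.mem_Icc hc)).1.trans (hM k hk)⟩
        · rintro κ₁ ⟨hc₁, hl₁, k₁, hk₁, hp₁⟩ κ₂ ⟨hc₂, hl₂, k₂, hk₂, hp₂⟩ hκ
          refine hl₁.ext hl₂ hc₁ hc₂ fun t hit htℓ ↦ ?_
          rcases hit.eq_or_lt with rfl | hit
          · exact hκ
          · rw [(hp₁.apply_le_and_eq_above hl₁ (hl₁.mem_Icc hc₁)).2 t hit htℓ,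
              habove k₁ hk₁ k₂ hk₂ t hit htℓ,
              (hp₂.apply_le_and_eq_above hl₂ (hl₂.mem_Icc hc₂)).2 t hit htℓ]
    _ = M := by simp

theorem Kcount_cons_le (ℓ : ℕ) (k : ℕ → ℕ) (ks : List (ℕ → ℕ)) (i : ℕ) :
    Kcount ℓ (k :: ks) i ≤ Kcount ℓ [k] i + Kcount ℓ ks i := by
  unfold Kcount
  convert Set.ncard_union_le _ _ using 2
  ext κ
  simp only [Set.mem_ofPred_eq, Set.mem_union, List.exists_mem_cons_iff, List.not_mem_nil,
    false_and, exists_false, or_false, and_or_left]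

theorem Kcount_singleton_le (ℓ : ℕ) (k : ℕ → ℕ) (i : ℕ) : Kcount ℓ [k] i ≤ k i :=
  Kcount_le_of_eq_above (by simp) (by simp)

theorem Kcount_pair_le_add (ℓ : ℕ) (k₁ k₂ : ℕ → ℕ) (i : ℕ) :
    Kcount ℓ [k₁, k₂] i ≤ k₁ i + k₂ i :=
  (Kcount_cons_le ℓ k₁ [k₂] i).trans <|
    add_le_add (Kcount_singleton_le ℓ k₁ i) (Kcount_singleton_le ℓ k₂ i)

theorem Kcount_pair_top_le_max (ℓ : ℕ) (k₁ k₂ : ℕ → ℕ) :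
    Kcount ℓ [k₁, k₂] ℓ ≤ max (k₁ ℓ) (k₂ ℓ) :=
  Kcount_le_of_eq_above (by simp) fun _ _ _ _ _ hlt hle ↦ absurd hle hlt.not_ge

theorem toIdx_succ (k : Fin ℓ → ℕ) (i : Fin ℓ) : toIdx ℓ k (i + 1) = k i := by
  simp [toIdx]

end LevelIndices

theorem prod_Icc_one_eq_prod_fin {M : Type*} [CommMonoid M] (n : ℕ) (f : ℕ → M) :
    ∏ i ∈ Finset.Icc 1 n, f i = ∏ i : Fin n, f (i + 1) := by
  rw [Fin.prod_univ_eq_prod_range (fun i ↦ f (i + 1)), Finset.range_eq_Ico,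
    Finset.prod_Ico_add' f 0 n 1, zero_add, Finset.Ico_add_one_right_eq_Icc]

theorem sum_piFinset_product_prod {ι R : Type*} [Fintype ι] [DecidableEq ι] [CommSemiring R]
    {α β : ι → Type*} (s : ∀ i, Finset (α i)) (t : ∀ i, Finset (β i)) (f : ∀ i, α i × β i → R) :
    ∑ p ∈ Fintype.piFinset s ×ˢ Fintype.piFinset t, ∏ i, f i (p.1 i, p.2 i) =
      ∏ i, ∑ q ∈ s i ×ˢ t i, f i q := by
  rw [Finset.prod_univ_sum]
  refine (Finset.sum_equiv (Equiv.arrowProdEquivProdArrow ι α β) (fun x ↦ ?_) fun _ _ ↦ rfl).symm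
  simp [forall_and]

theorem sum_range_inv_two_pow (n : ℕ) :
    ∑ a ∈ Finset.range n, ((2 : ℝ) ^ a)⁻¹ = 2 * (1 - ((2 : ℝ) ^ n)⁻¹) := by
  simp only [← inv_pow]
  rw [geom_sum_inv (by norm_num) (by norm_num)]
  ring

theorem one_sub_mul_le_one_sub_pow {R : Type*} [Ring R] [LinearOrder R]
    [IsStrictOrderedRing R] {x : R} (hx : x ≤ 2) (m : ℕ) : 1 - m * x ≤ (1 - x) ^ m := by
  simpa only [mul_neg, ← sub_eq_add_neg] using one_add_mul_le_pow (neg_le_neg hx) m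

theorem five_mul_le_mul_log_div_four {x : ℕ} (hx : 2 ≤ x) : 5 * x ≤ 20 * x * Nat.log 2 x / 4 := by
  have hlog : 1 ≤ Nat.log 2 x := Nat.log_pos one_lt_two hx
  rw [Nat.le_div_iff_mul_le four_pos]
  calc 5 * x * 4 = 20 * x * 1 := by ring
    _ ≤ 20 * x * Nat.log 2 x := Nat.mul_le_mul_left _ hlog

theorem four_mul_le_two_pow {ℓ T : ℕ} (h : ℓ + 2 ≤ T) : 4 * ℓ ≤ 2 ^ T :=
  calc 4 * ℓ ≤ 4 * 2 ^ ℓ := by gcongr; exact Nat.lt_two_pow_self.le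
    _ = 2 ^ (ℓ + 2) := by ring
    _ ≤ 2 ^ T := Nat.pow_le_pow_right two_pos h

section LevelWeight

/-- Lower bound, in terms of the entries `q = (k¹ᵢ, k²ᵢ)`, for the factor `2 ^ (-Kᵢ)` of a pair
`(k¹, k²)` in the sum over distinct pairs. Levels are numbered from `0`, so `Fin.last L` is the
top one; the weight there vanishes on the diagonal so that a pair of equal vectors gets total
weight `0`. -/
def levelWeight {L : ℕ} (i : Fin (L + 1)) (q : ℕ × ℕ) : ℝ :=
  if i = Fin.last L then
    if q.1 = q.2 then 0 else ((2 : ℝ) ^ max q.1 q.2)⁻¹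
  else ((2 : ℝ) ^ (q.1 + q.2))⁻¹

variable {L : ℕ}

theorem levelWeight_last (q : ℕ × ℕ) :
    levelWeight (Fin.last L) q = if q.1 = q.2 then 0 else ((2 : ℝ) ^ max q.1 q.2)⁻¹ :=
  if_pos rfl

theorem levelWeight_castSucc (i : Fin L) (q : ℕ × ℕ) :
    levelWeight i.castSucc q = ((2 : ℝ) ^ (q.1 + q.2))⁻¹ :=
  if_neg i.castSucc_ne_last

theorem levelWeight_nonneg (i : Fin (L + 1)) (q : ℕ × ℕ) : 0 ≤ levelWeight i q := by
  unfold levelWeight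
  split_ifs <;> positivity

theorem levelWeight_le_inv_two_pow_Kcount (k₁ k₂ : Fin (L + 1) → ℕ) (i : Fin (L + 1)) :
    levelWeight i (k₁ i, k₂ i) ≤
      ((2 : ℝ) ^ Kcount (L + 1) [toIdx (L + 1) k₁, toIdx (L + 1) k₂] (i + 1))⁻¹ := by
  induction i using Fin.lastCases with
  | last =>
    rw [levelWeight_last]
    split_ifs
    · positivity
    · have hK := Kcount_pair_top_le_max (L + 1) (toIdx (L + 1) k₁) (toIdx (L + 1) k₂)
      have htop (k : Fin (L + 1) → ℕ) : toIdx (L + 1) k (L + 1) = k (Fin.last L) :=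
        toIdx_succ k (Fin.last L)
      rw [htop, htop] at hK
      exact inv_pow_le_inv_pow_of_le one_le_two hK
  | cast i =>
    rw [levelWeight_castSucc]
    have hK := Kcount_pair_le_add (L + 1) (toIdx (L + 1) k₁) (toIdx (L + 1) k₂) (i.castSucc + 1)
    rw [toIdx_succ, toIdx_succ] at hK
    exact inv_pow_le_inv_pow_of_le one_le_two hK

theorem prod_levelWeight_self (k : Fin (L + 1) → ℕ) : ∏ i, levelWeight i (k i, k i) = 0 :=
  Finset.prod_eq_zero (Finset.mem_univ (Fin.last L)) (by rw [levelWeight_last, if_pos rfl])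

theorem sum_prod_levelWeight_le (S : Finset ((Fin (L + 1) → ℕ) × (Fin (L + 1) → ℕ))) :
    ∑ p ∈ S, ∏ i, levelWeight i (p.1 i, p.2 i) ≤
      ∑ p ∈ S.filter (fun p ↦ p.1 ≠ p.2), ∏ i ∈ Finset.Icc 1 (L + 1),
        ((2 : ℝ) ^ Kcount (L + 1) [toIdx (L + 1) p.1, toIdx (L + 1) p.2] i)⁻¹ := by
  have hdiag : ∀ p ∈ S, ∏ i, levelWeight i (p.1 i, p.2 i) ≠ 0 → p.1 ≠ p.2 := by
    rintro ⟨k₁, k₂⟩ - hne (rfl : k₁ = k₂)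
    exact hne (prod_levelWeight_self k₁)
  rw [← Finset.sum_filter_of_ne hdiag]
  refine Finset.sum_le_sum fun p _ ↦ ?_
  rw [prod_Icc_one_eq_prod_fin]
  exact Finset.prod_le_prod (fun i _ ↦ levelWeight_nonneg i _)
    fun i _ ↦ levelWeight_le_inv_two_pow_Kcount p.1 p.2 i

theorem sum_levelWeight_castSucc (i : Fin L) (n : ℕ) :
    ∑ q ∈ Finset.range n ×ˢ Finset.range n, levelWeight i.castSucc q =
      4 * (1 - ((2 : ℝ) ^ n)⁻¹) ^ 2 := by
  simp only [levelWeight_castSucc, pow_add, mul_inv, Finset.sum_product]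
  rw [← Finset.sum_mul_sum, sum_range_inv_two_pow]
  ring

theorem sum_levelWeight_last_ge {n : ℕ} (hn : 4 ≤ n) :
    11 / 4 ≤ ∑ q ∈ Finset.range n ×ˢ Finset.range n, levelWeight (Fin.last L) q := by
  have hsub : Finset.range 4 ⊆ Finset.range n := Finset.range_subset_range.2 hn
  calc (11 / 4 : ℝ)
      = ∑ q ∈ Finset.range 4 ×ˢ Finset.range 4, levelWeight (Fin.last L) q := by
        simp only [levelWeight_last, Finset.sum_product, Finset.sum_range_succ,
          Finset.sum_range_zero]
        norm_num
    _ ≤ _ := Finset.sum_le_sum_of_subset_of_nonneg (Finset.product_subset_product hsub hsub)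
        fun q _ _ ↦ levelWeight_nonneg _ q

theorem two_pow_le_prod_sum_levelWeight {T : ℕ} (hT : 3 ≤ T) (hL : 4 * L ≤ 2 ^ T) :
    (2 : ℝ) ^ (2 * L + 1) ≤
      ∏ i : Fin (L + 1), ∑ q ∈ Finset.range (T + 1) ×ˢ Finset.range (T + 1), levelWeight i q := by
  have hdiv : ((2 * L : ℕ) : ℝ) * ((2 : ℝ) ^ (T + 1))⁻¹ ≤ 1 / 4 := by
    rw [← div_eq_mul_inv, div_le_div_iff₀ (by positivity) four_pos, one_mul]
    exact_mod_cast (by rw [pow_succ]; omega : 2 * L * 4 ≤ 2 ^ (T + 1))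
  have hinv : ((2 : ℝ) ^ (T + 1))⁻¹ ≤ 2 :=
    (inv_le_one_of_one_le₀ (one_le_pow₀ one_le_two)).trans one_le_two
  have hpow : (3 / 4 : ℝ) ≤ (1 - ((2 : ℝ) ^ (T + 1))⁻¹) ^ (2 * L) :=
    le_trans (by linarith) (one_sub_mul_le_one_sub_pow hinv (2 * L))
  calc (2 : ℝ) ^ (2 * L + 1) = 4 ^ L * 2 := by rw [pow_succ, pow_mul]; norm_num
    _ ≤ 4 ^ L * (3 / 4) * (11 / 4) := by linarith [pow_pos (four_pos (α := ℝ)) L]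
    _ ≤ (4 * (1 - ((2 : ℝ) ^ (T + 1))⁻¹) ^ 2) ^ L * (11 / 4) := by
        rw [mul_pow, ← pow_mul]
        gcongr
    _ ≤ _ := by
        rw [Fin.prod_univ_castSucc]
        simp only [sum_levelWeight_castSucc, Finset.prod_const, Finset.card_univ,
          Fintype.card_fin]
        gcongr
        exact sum_levelWeight_last_ge (by omega)

end LevelWeight

theorem statement_13_general {ℓ T : ℕ} (hℓ : 1 ≤ ℓ) (hT : 3 ≤ T) (hℓT : 4 * ℓ ≤ 2 ^ T) :
    (2 : ℝ) ^ (2 * ℓ - 1) ≤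
      ∑ p ∈ ((Fintype.piFinset fun _ : Fin ℓ => Finset.range (T + 1)) ×ˢ
          Fintype.piFinset fun _ : Fin ℓ => Finset.range (T + 1)).filter
          (fun p => p.1 ≠ p.2),
        ∏ i ∈ Finset.Icc 1 ℓ, ((2 : ℝ) ^ Kcount ℓ [toIdx ℓ p.1, toIdx ℓ p.2] i)⁻¹ := by
  obtain ⟨L, rfl⟩ := Nat.exists_eq_add_of_le' hℓ
  rw [show 2 * (L + 1) - 1 = 2 * L + 1 by omega]
  refine (two_pow_le_prod_sum_levelWeight hT (by omega)).trans ?_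
  rw [← sum_piFinset_product_prod]
  exact sum_prod_levelWeight_le _

/-- Lemma 6.7: lower bound on the sum of `∏ 2^{-K_i}` over pairs of
distinct short indices. -/
theorem statement_13 :
    ∃ N : ℕ, ∀ n : ℕ, N ≤ n → ∀ ℓ : ℕ, 2 ≤ ℓ → ℓ < Nat.log 2 n → ∀ τ : ℕ,
      τ = 20 * Nat.log 2 n * Nat.log 2 (Nat.log 2 n) →
      (2 : ℝ) ^ (2 * ℓ - 1) ≤
        ∑ p ∈ ((Fintype.piFinset fun _ : Fin ℓ => Finset.range (τ / 4 + 1)) ×ˢ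
            Fintype.piFinset fun _ : Fin ℓ => Finset.range (τ / 4 + 1)).filter
            (fun p => p.1 ≠ p.2),
          ∏ i ∈ Finset.Icc 1 ℓ, ((2 : ℝ) ^ Kcount ℓ [toIdx ℓ p.1, toIdx ℓ p.2] i)⁻¹ := by
  refine ⟨0, fun n _ ℓ hℓ hn τ hτ ↦ ?_⟩
  have hT : 5 * Nat.log 2 n ≤ τ / 4 := hτ ▸ five_mul_le_mul_log_div_four (by omega)
  exact statement_13_general (by omega) (by omega) (four_mul_le_two_pow (by omega))

end EDW
end
end
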